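/- arXiv:2307.09498 — 2 statements merged into one kernel-verified Lean document; each statement's English description precedes it below -/
import Mathlib

section
/- Let J be a real N×N matrix, f, u₀, w ∈ ℝᴺ, h ≥ 0, γ ∈ ℝ, C ≥ 0, ε ≥ 0, and let δ be a real N×N matrix with ‖δ‖₂ ≤ ε. Define u₁ = u₀ + h·φ₁(hJ)f and ũ₁ = u₀ + h·γ·f + (I + δ)·(h·(φ₁(hJ) − γI)f). If ‖u₁ − w‖₂ ≤ C·h³, then the one-step error of the mixed precision scheme relative to w satisfies ‖ũ₁ − w‖₂ ≤ C·h³ + h·ε·‖φ₁(hJ)f − γ·f‖₂. -/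
/-- `φ_k(A) = ∑_{n=0}^∞ Aⁿ/(n+k)!` for a real square matrix `A`. -/
noncomputable def phiM {N : ℕ} (k : ℕ) (A : Matrix (Fin N) (Fin N) ℝ) :
    Matrix (Fin N) (Fin N) ℝ :=
  ∑' n : ℕ, (((n + k).factorial : ℝ))⁻¹ • A ^ n

/-- Action of a matrix on a vector of Euclidean space (matrix-vector product). -/
noncomputable def mvE {N : ℕ} (A : Matrix (Fin N) (Fin N) ℝ)
    (x : EuclideanSpace ℝ (Fin N)) : EuclideanSpace ℝ (Fin N) :=
  Matrix.toEuclideanCLM (𝕜 := ℝ) A x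

/-- The operator 2-norm of a real matrix (norm induced by the Euclidean vector norm). -/
noncomputable def opN {N : ℕ} (A : Matrix (Fin N) (Fin N) ℝ) : ℝ :=
  ‖Matrix.toEuclideanCLM (𝕜 := ℝ) A‖

theorem norm_mvE_one_add_sub_le {N : ℕ} {δ : Matrix (Fin N) (Fin N) ℝ} {ε : ℝ}
    (hδ : opN δ ≤ ε) (x : EuclideanSpace ℝ (Fin N)) : ‖mvE (1 + δ) x - x‖ ≤ ε * ‖x‖ := by
  have perturbation : mvE (1 + δ) x - x = Matrix.toEuclideanCLM (𝕜 := ℝ) δ x := by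
    simp only [mvE, map_add, map_one, add_apply, one_apply_eq_self,
      add_sub_cancel_left]
  rw [perturbation]
  exact ContinuousLinearMap.le_of_opNorm_le _ hδ x

/-- Here `p` stands for `φ₁(hJ)f` and `lp` for the low precision evaluation `x ↦ (I + δ)x`,
allowing for a nonlinear rounding. -/
theorem stmt_4_general {𝕜 E : Type*} [NormedField 𝕜] [SeminormedAddCommGroup E]
    [NormedSpace 𝕜 E] {p f u₀ w : E} {h γ : 𝕜} {lp : E → E} {B ε : ℝ}
    (hlp : ∀ x, ‖lp x - x‖ ≤ ε * ‖x‖) (hu₁ : ‖u₀ + h • p - w‖ ≤ B) :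
    ‖u₀ + (h * γ) • f + lp (h • (p - γ • f)) - w‖ ≤ B + ‖h‖ * ε * ‖p - γ • f‖ := by
  set x := h • (p - γ • f) with hx
  have exact_step : u₀ + (h * γ) • f + x = u₀ + h • p := by
    rw [hx]; module
  calc ‖u₀ + (h * γ) • f + lp x - w‖
      = ‖(u₀ + h • p - w) + (lp x - x)‖ := by rw [← exact_step]; congr 1; abel
    _ ≤ B + ε * ‖x‖ := norm_add_le_of_le hu₁ (hlp x)
    _ = B + ‖h‖ * ε * ‖p - γ • f‖ := by rw [hx, norm_smul]; ring

/-- If the exact exponential Rosenbrock–Euler step `u₁ = u₀ + h·φ₁(hJ)f` satisfies the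
local error bound `‖u₁ − w‖₂ ≤ C·h³`, then the mixed precision step
`ũ₁ = u₀ + h·γ·f + (I + δ)(h·(φ₁(hJ) − γI)f)` with `‖δ‖₂ ≤ ε` satisfies
`‖ũ₁ − w‖₂ ≤ C·h³ + h·ε·‖φ₁(hJ)f − γ·f‖₂`. -/
theorem stmt_4 {N : ℕ} (J : Matrix (Fin N) (Fin N) ℝ)
    (f u₀ w : EuclideanSpace ℝ (Fin N)) (h : ℝ) (hh : 0 ≤ h) (γ : ℝ)
    (C : ℝ) (hC : 0 ≤ C) (ε : ℝ) (hε : 0 ≤ ε)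
    (δ : Matrix (Fin N) (Fin N) ℝ) (hδ : opN δ ≤ ε)
    (hu₁ : ‖(u₀ + h • mvE (phiM 1 (h • J)) f) - w‖ ≤ C * h ^ 3) :
    ‖(u₀ + (h * γ) • f + mvE (1 + δ) (h • (mvE (phiM 1 (h • J)) f - γ • f))) - w‖ ≤
      C * h ^ 3 + h * ε * ‖mvE (phiM 1 (h • J)) f - γ • f‖ := by
  simpa only [Real.norm_of_nonneg hh] using
    stmt_4_general (norm_mvE_one_add_sub_le hδ) hu₁
end

section
/- Inexact Arnoldi relation: let A be a real N×N matrix, let v₁, …, v_{m+1} ∈ ℝᴺ be orthonormal vectors, let E₁, …, E_m be real N×N perturbation matrices, and let H be a real (m+1)×m matrix such that for every j with 1 ≤ j ≤ m, (A + E_j)·v_j = ∑_{i=1}^{j+1} H_{i,j}·v_i and H_{i,j} = 0 for i > j+1. Define the aggregate perturbation ℰ_m = ∑_{j=1}^m E_j·v_j·v_jᵀ, let V_m be the N×m matrix with columns v₁, …, v_m, and let H_m be the top m×m block of H. Then (A + ℰ_m)·V_m = V_m·H_m + H_{m+1,m}·v_{m+1}·e_mᵀ, where e_m is the m-th standard basis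 vector of ℝᵐ. -/
open Matrix

/-- The aggregate perturbation `ℰ = ∑ j, E_j u_j w_jᵀ`, a single matrix that acts on each basis
vector `u_j` as `E_j` does. It is built with a dual family `w`, meaning `w_iᵀ u_j = δ_ij`: the
choice `w = u` is the orthonormal case, and `w = star u` the unitary one. -/
def aggregatePerturbation {R l n ι : Type*} [NonUnitalSemiring R] [Fintype n] [Fintype ι]
    (E : ι → Matrix l n R) (u w : ι → n → R) : Matrix l n R :=
  ∑ j, E j * vecMulVec (u j) (w j)

theorem aggregatePerturbation_mulVec {R l n ι : Type*} [Semiring R] [Fintype n] [Fintype ι]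
    [DecidableEq ι] (E : ι → Matrix l n R) {u w : ι → n → R}
    (hdual : ∀ i j, w i ⬝ᵥ u j = if i = j then 1 else 0) (j : ι) :
    aggregatePerturbation E u w *ᵥ u j = E j *ᵥ u j := by
  have hterm (k : ι) :
      (E k * vecMulVec (u k) (w k)) *ᵥ u j = if k = j then E k *ᵥ u k else 0 := by
    rw [← mulVec_mulVec, vecMulVec_mulVec, hdual]
    split_ifs <;> simp
  simp only [aggregatePerturbation, sum_mulVec, hterm, Finset.sum_ite_eq', Finset.mem_univ, if_true]

theorem add_aggregatePerturbation_mul_eq_mul {R l n ι κ : Type*} [CommSemiring R] [Fintype n]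
    [Fintype ι] [DecidableEq ι] [Fintype κ] {A : Matrix l n R} {E : ι → Matrix l n R}
    {u w : ι → n → R} {v : κ → l → R} {H : Matrix κ ι R}
    (hdual : ∀ i j, w i ⬝ᵥ u j = if i = j then 1 else 0)
    (hstep : ∀ j, (A + E j) *ᵥ u j = ∑ i, H i j • v i) :
    (A + aggregatePerturbation E u w) * (of u)ᵀ = (of v)ᵀ * H := by
  have hcol (j : ι) : (A + aggregatePerturbation E u w) *ᵥ u j = ∑ i, H i j • v i := by
    rw [add_mulVec, aggregatePerturbation_mulVec E hdual, ← add_mulVec, hstep]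
  ext i j
  calc ((A + aggregatePerturbation E u w) * (of u)ᵀ) i j
      = ((A + aggregatePerturbation E u w) *ᵥ u j) i := rfl
    _ = ((of v)ᵀ * H) i j := by simp [hcol, mul_apply, mul_comm]

theorem mul_eq_submatrix_castSucc_mul_add_vecMulVec {R l o : Type*} [NonUnitalNonAssocSemiring R]
    {k : ℕ} (M : Matrix l (Fin (k + 1)) R) (H : Matrix (Fin (k + 1)) o R) :
    M * H = M.submatrix id Fin.castSucc * H.submatrix Fin.castSucc id +
      vecMulVec (M.col (Fin.last k)) (H.row (Fin.last k)) := by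
  ext i j
  simp [mul_apply, vecMulVec_apply, Fin.sum_univ_castSucc]

theorem stmt_15_general {R n : Type*} [CommSemiring R] [Fintype n] {m : ℕ}
    (A : Matrix n n R) (v : Fin (m + 2) → n → R) (w : Fin (m + 1) → n → R)
    (hdual : ∀ i j : Fin (m + 1), w i ⬝ᵥ v j.castSucc = if i = j then 1 else 0)
    (E : Fin (m + 1) → Matrix n n R) (H : Matrix (Fin (m + 2)) (Fin (m + 1)) R)
    (hArnoldi : ∀ j, (A + E j) *ᵥ v j.castSucc = ∑ i, H i j • v i)
    (hlast : ∀ j ≠ Fin.last m, H (Fin.last (m + 1)) j = 0) :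
    let V : Matrix n (Fin (m + 1)) R := of fun i j => v j.castSucc i
    (A + aggregatePerturbation E (fun j => v j.castSucc) w) * V =
      V * H.submatrix Fin.castSucc id +
        H (Fin.last (m + 1)) (Fin.last m) •
          vecMulVec (v (Fin.last (m + 1))) (Pi.single (Fin.last m) 1) := by
  intro V
  have hrow : H.row (Fin.last (m + 1)) =
      H (Fin.last (m + 1)) (Fin.last m) • Pi.single (Fin.last m) 1 := by
    ext j
    by_cases hj : j = Fin.last m
    · simp [hj]
    · simp [hj, hlast]
  rw [← vecMulVec_smul, ← hrow]
  exact (add_aggregatePerturbation_mul_eq_mul hdual hArnoldi).trans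
    (mul_eq_submatrix_castSucc_mul_add_vecMulVec (of v)ᵀ H)

/-- Inexact Arnoldi relation: if orthonormal vectors `v₁, …, v_{m+1}` (here indexed by
`Fin (m+2)` with `m+1` playing the role of the paper's `m ≥ 1`) satisfy
`(A + E_j)·v_j = ∑_{i=1}^{j+1} H_{i,j}·v_i` with `H` of Hessenberg form, then with
`ℰ_m = ∑_j E_j·v_j·v_jᵀ`, `V_m = [v₁ ⋯ v_m]`, and `H_m` the top square block of `H`,
`(A + ℰ_m)·V_m = V_m·H_m + H_{m+1,m}·v_{m+1}·e_mᵀ`. -/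
theorem stmt_15 {N m : ℕ}
    (A : Matrix (Fin N) (Fin N) ℝ)
    (v : Fin (m + 2) → Fin N → ℝ)
    (hortho : ∀ i j : Fin (m + 2), v i ⬝ᵥ v j = if i = j then (1 : ℝ) else 0)
    (E : Fin (m + 1) → Matrix (Fin N) (Fin N) ℝ)
    (H : Matrix (Fin (m + 2)) (Fin (m + 1)) ℝ)
    (hArnoldi : ∀ j : Fin (m + 1),
      (A + E j).mulVec (v j.castSucc) = ∑ i : Fin (m + 2), H i j • v i)
    (hHess : ∀ (i : Fin (m + 2)) (j : Fin (m + 1)), (j : ℕ) + 1 < (i : ℕ) → H i j = 0) :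
    let V : Matrix (Fin N) (Fin (m + 1)) ℝ := Matrix.of fun i j => v j.castSucc i
    let Hm : Matrix (Fin (m + 1)) (Fin (m + 1)) ℝ := H.submatrix Fin.castSucc id
    let ℰ : Matrix (Fin N) (Fin N) ℝ :=
      ∑ j : Fin (m + 1), E j * Matrix.vecMulVec (v j.castSucc) (v j.castSucc)
    (A + ℰ) * V = V * Hm +
      H (Fin.last (m + 1)) (Fin.last m) •
        Matrix.vecMulVec (v (Fin.last (m + 1))) (Pi.single (Fin.last m) 1) := by
  exact stmt_15_general A v (fun j => v j.castSucc) (by simp [hortho]) E H hArnoldi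
    fun j hj => hHess _ j (by simpa using Fin.val_lt_last hj)
end
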